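/- In the multi-agent Gaussian estimation problem, the naive MMSE strategy ẑ_i = L_i E[x | y_0, y_i] = L_i ( x̂_0 + K_i ỹ_i ) with K_i = Θ̂_i Σ̂_ii⁻¹ incurs the expected team estimation error J^mmse = Tr( Lᵀ S L P_0 ) + Σ_{i=1}^n Tr( K_iᵀ L_iᵀ Σ_{j=1}^n S_ij L_j [ K_j Σ̂_ji − 2 Θ̂_i ] ), where P_0 = Var(x − x̂_0). -/

import Mathlib

open MeasureTheory ProbabilityTheory Matrix

/-!
The estimation error of agent `i` is `Lᵢ (e - Kᵢ ỹᵢ)` with `e = x - x̂₀`, so the expected team error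
is `∑ᵢⱼ Tr (Lᵢᵀ Sᵢⱼ Lⱼ Cⱼᵢ)`, where
`Cⱼᵢ = E[(e - Kⱼ ỹⱼ)(e - Kᵢ ỹᵢ)ᵀ] = P₀ - Θ̂ᵢ Kᵢᵀ - Kⱼ Θ̂ⱼᵀ + Kⱼ Σ̂ⱼᵢ Kᵢᵀ`.
Here `E[e ỹᵢᵀ] = E[x ỹᵢᵀ] = Θ̂ᵢ` because `ỹᵢ` is orthogonal to every square-integrable function of
`y₀`. The `P₀` terms add up to `Tr (Lᵀ S L P₀)`, and since `S` is symmetric the two cross terms have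
the same double sum, which gives the factor `2`.
-/

section BlockSums

variable {ι a R : Type*} {b d : ι → Type*} [Fintype ι]

theorem dotProduct_mulVec_eq_sum {b : Type*} [Fintype a] [Fintype b] [CommSemiring R]
    (A : Matrix a b R) (u : a → R) (v : b → R) :
    u ⬝ᵥ A *ᵥ v = ∑ k, ∑ l, A k l * (v l * u k) := by
  simp only [dotProduct, mulVec, Finset.mul_sum]
  exact Finset.sum_congr rfl fun k _ => Finset.sum_congr rfl fun l _ => by ring

theorem sum_single_mul_eq_dotProduct [DecidableEq ι] [∀ i, Fintype (b i)]
    [NonUnitalNonAssocSemiring R] (i : ι) (u : b i → R) (v : ∀ j, b j → R) :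
    ∑ j, ∑ k, (Pi.single i u : ∀ j, b j → R) j k * v j k = u ⬝ᵥ v i := by
  rw [Fintype.sum_eq_single i fun j hj => by simp [Pi.single_eq_of_ne hj], Pi.single_eq_same]
  rfl

theorem transpose_mul_mul_eq_sum_blocks [∀ i, Fintype (d i)] [NonUnitalSemiring R]
    {L : ∀ i, Matrix (d i) a R} {S : ∀ i j, Matrix (d i) (d j) R}
    {Lbig : Matrix (Σ i, d i) a R} (hL : ∀ i r k, Lbig ⟨i, r⟩ k = L i r k)
    {Sbig : Matrix (Σ i, d i) (Σ i, d i) R} (hS : ∀ i j r s, Sbig ⟨i, r⟩ ⟨j, s⟩ = S i j r s) :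
    Lbigᵀ * Sbig * Lbig = ∑ i, ∑ j, (L i)ᵀ * S i j * L j := by
  ext k l
  simp only [Matrix.sum_apply, mul_apply, transpose_apply, Fintype.sum_sigma, hL, hS,
    Finset.sum_mul]
  exact (Finset.sum_congr rfl fun j _ => Finset.sum_comm).trans Finset.sum_comm

theorem sum_trace_mul_transpose_symm [Fintype a] [CommSemiring R] {M : ι → ι → Matrix a a R}
    (hM : ∀ i j, (M i j)ᵀ = M j i) (Q : ι → Matrix a a R) :
    ∑ i, ∑ j, (M i j * (Q j)ᵀ).trace = ∑ i, ∑ j, (M i j * Q i).trace := by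
  rw [Finset.sum_comm]
  refine Finset.sum_congr rfl fun i _ => Finset.sum_congr rfl fun j _ => ?_
  rw [← trace_transpose, transpose_mul, transpose_transpose, hM, trace_mul_comm]

theorem sum_trace_mul_gain_error [Fintype a] [∀ i, Fintype (b i)] [CommRing R]
    {M : ι → ι → Matrix a a R} (hM : ∀ i j, (M i j)ᵀ = M j i) (P : Matrix a a R)
    (K Θ : ∀ i, Matrix a (b i) R) (Q : ∀ i j, Matrix (b i) (b j) R) :
    ∑ i, ∑ j, (M i j * (P - Θ i * (K i)ᵀ - K j * (Θ j)ᵀ + K j * Q j i * (K i)ᵀ)).trace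
      = ((∑ i, ∑ j, M i j) * P).trace
        + ∑ i, ∑ j, ((K i)ᵀ * M i j * (K j * Q j i - (2 : R) • Θ i)).trace := by
  have cross : ∑ i, ∑ j, (M i j * (K j * (Θ j)ᵀ)).trace
      = ∑ i, ∑ j, (M i j * (Θ i * (K i)ᵀ)).trace := by
    simpa only [transpose_mul, transpose_transpose] using
      sum_trace_mul_transpose_symm hM fun i => Θ i * (K i)ᵀ
  have cycle (i j : ι) (B : Matrix a (b i) R) :
      ((K i)ᵀ * M i j * B).trace = (M i j * (B * (K i)ᵀ)).trace := by
    rw [Matrix.mul_assoc, trace_mul_comm, Matrix.mul_assoc]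
  simp only [cycle, Matrix.mul_add, Matrix.mul_sub, Matrix.mul_smul, trace_add, trace_sub,
    trace_smul, Matrix.sum_mul, trace_sum, Finset.sum_add_distrib, Finset.sum_sub_distrib, cross,
    smul_eq_mul, ← Finset.mul_sum]
  ring

end BlockSums

section CrossMoment

variable {Ω a b c : Type*} [MeasurableSpace Ω] {μ : Measure Ω}

/-- The matrix `E[f gᵀ]` of mixed second moments of two random vectors. The means are not
subtracted, so it is `Cov(f, g)` only when `f` or `g` is centred. -/
noncomputable def crossMoment (μ : Measure Ω) (f : Ω → a → ℝ) (g : Ω → b → ℝ) : Matrix a b ℝ :=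
  of fun k l => ∫ ω, f ω k * g ω l ∂μ

theorem transpose_crossMoment (f : Ω → a → ℝ) (g : Ω → b → ℝ) :
    (crossMoment μ f g)ᵀ = crossMoment μ g f := by
  ext k l
  simp only [crossMoment, transpose_apply, of_apply, mul_comm]

variable [Fintype a] [Fintype b]

theorem integrable_mul_of_memLp_two {f : Ω → a → ℝ} {g : Ω → b → ℝ} (hf : MemLp f 2 μ)
    (hg : MemLp g 2 μ) (k : a) (l : b) : Integrable (fun ω => f ω k * g ω l) μ :=
  (hf.eval k).integrable_mul (hg.eval l)

theorem memLp_mulVec {p : ENNReal} (A : Matrix a b ℝ) {f : Ω → b → ℝ} (hf : MemLp f p μ) :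
    MemLp (fun ω => A *ᵥ f ω) p μ :=
  (LinearMap.toContinuousLinearMap A.mulVecLin).comp_memLp' hf

theorem crossMoment_sub_left [Fintype c] {f g : Ω → a → ℝ} {h : Ω → c → ℝ} (hf : MemLp f 2 μ)
    (hg : MemLp g 2 μ) (hh : MemLp h 2 μ) :
    crossMoment μ (f - g) h = crossMoment μ f h - crossMoment μ g h := by
  ext k l
  simp only [crossMoment, of_apply, Matrix.sub_apply, Pi.sub_apply, sub_mul]
  exact integral_sub (integrable_mul_of_memLp_two hf hh k l) (integrable_mul_of_memLp_two hg hh k l)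

theorem crossMoment_mulVec_left (A : Matrix c a ℝ) {f : Ω → a → ℝ} {g : Ω → b → ℝ}
    (hf : MemLp f 2 μ) (hg : MemLp g 2 μ) :
    crossMoment μ (fun ω => A *ᵥ f ω) g = A * crossMoment μ f g := by
  ext k l
  simp only [crossMoment, of_apply, mul_apply, mulVec, dotProduct, Finset.sum_mul, mul_assoc]
  rw [integral_finsetSum _ fun r _ => (integrable_mul_of_memLp_two hf hg r l).const_mul _]
  simp only [integral_const_mul]

theorem crossMoment_sub_right [Fintype c] {f : Ω → a → ℝ} {g h : Ω → c → ℝ} (hf : MemLp f 2 μ)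
    (hg : MemLp g 2 μ) (hh : MemLp h 2 μ) :
    crossMoment μ f (g - h) = crossMoment μ f g - crossMoment μ f h := by
  rw [← transpose_crossMoment, crossMoment_sub_left hg hh hf, transpose_sub,
    transpose_crossMoment, transpose_crossMoment]

theorem crossMoment_mulVec_right (A : Matrix c b ℝ) {f : Ω → a → ℝ} {g : Ω → b → ℝ}
    (hf : MemLp f 2 μ) (hg : MemLp g 2 μ) :
    crossMoment μ f (fun ω => A *ᵥ g ω) = crossMoment μ f g * Aᵀ := by
  rw [← transpose_crossMoment, crossMoment_mulVec_left A hg hf, transpose_mul,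
    transpose_crossMoment]

theorem crossMoment_sub_mulVec_sub_mulVec [Fintype c] {e : Ω → a → ℝ} {v : Ω → b → ℝ}
    {w : Ω → c → ℝ} (he : MemLp e 2 μ) (hv : MemLp v 2 μ) (hw : MemLp w 2 μ)
    (A : Matrix a b ℝ) (B : Matrix a c ℝ) :
    crossMoment μ (e - fun ω => A *ᵥ v ω) (e - fun ω => B *ᵥ w ω)
      = crossMoment μ e e - crossMoment μ e w * Bᵀ - A * (crossMoment μ e v)ᵀ
        + A * crossMoment μ v w * Bᵀ := by
  have hBw := memLp_mulVec B hw
  have hAv := memLp_mulVec A hv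
  rw [crossMoment_sub_left he hAv (he.sub hBw), crossMoment_sub_right he he hBw,
    crossMoment_sub_right hAv he hBw, crossMoment_mulVec_right B he hw,
    crossMoment_mulVec_left A hv he, crossMoment_mulVec_left A hv hBw,
    crossMoment_mulVec_right B hv hw, transpose_crossMoment, Matrix.mul_assoc]
  abel

theorem integrable_dotProduct_mulVec (A : Matrix a b ℝ) {f : Ω → a → ℝ} {g : Ω → b → ℝ}
    (hf : MemLp f 2 μ) (hg : MemLp g 2 μ) : Integrable (fun ω => f ω ⬝ᵥ A *ᵥ g ω) μ := by
  simp only [dotProduct_mulVec_eq_sum]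
  exact integrable_finsetSum _ fun k _ => integrable_finsetSum _ fun l _ =>
    (integrable_mul_of_memLp_two hg hf l k).const_mul _

theorem integral_dotProduct_mulVec (A : Matrix a b ℝ) {f : Ω → a → ℝ} {g : Ω → b → ℝ}
    (hf : MemLp f 2 μ) (hg : MemLp g 2 μ) :
    ∫ ω, f ω ⬝ᵥ A *ᵥ g ω ∂μ = (A * crossMoment μ g f).trace := by
  have hint (k : a) (l : b) : Integrable (fun ω => A k l * (g ω l * f ω k)) μ :=
    (integrable_mul_of_memLp_two hg hf l k).const_mul _
  simp only [dotProduct_mulVec_eq_sum, trace, diag_apply, mul_apply, crossMoment, of_apply]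
  rw [integral_finsetSum _ fun k _ => integrable_finsetSum _ fun l _ => hint k l]
  simp only [integral_finsetSum _ fun l _ => hint _ l, integral_const_mul]

end CrossMoment

section Innovation

variable {Ω a b : Type*} {m mΩ : MeasurableSpace Ω} {μ : Measure Ω}

/-- The conditional expectation `E[f | m]` of a random vector, taken coordinate by coordinate.
For integrable `f` it agrees with the vector-valued `μ[f | m]` almost everywhere. -/
noncomputable def coordCondExp (μ : Measure Ω) (m : MeasurableSpace Ω) (f : Ω → a → ℝ) :
    Ω → a → ℝ :=
  fun ω k => (μ[fun ω' => f ω' k | m]) ω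

theorem memLp_coordCondExp [Fintype a] {p : ENNReal} (hp : 1 ≤ p) {f : Ω → a → ℝ}
    (hf : MemLp f p μ) : MemLp (coordCondExp μ m f) p μ :=
  MemLp.of_eval fun k => (hf.eval k).condExp hp

theorem integral_mul_condExp_of_stronglyMeasurable (hm : m ≤ mΩ) [SigmaFinite (μ.trim hm)]
    {f g : Ω → ℝ} (hf : StronglyMeasurable[m] f) (hfg : Integrable (f * g) μ)
    (hg : Integrable g μ) : ∫ ω, f ω * (μ[g | m]) ω ∂μ = ∫ ω, f ω * g ω ∂μ :=
  calc ∫ ω, f ω * (μ[g | m]) ω ∂μ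
      = ∫ ω, (μ[f * g | m]) ω ∂μ :=
        integral_congr_ae (condExp_mul_of_stronglyMeasurable_left hf hfg hg).symm
    _ = ∫ ω, f ω * g ω ∂μ := integral_condExp hm

variable [Fintype a] [Fintype b] [IsFiniteMeasure μ]

theorem crossMoment_coordCondExp_right (hm : m ≤ mΩ) {f : Ω → a → ℝ} {g : Ω → b → ℝ}
    (hfm : ∀ k, StronglyMeasurable[m] fun ω => f ω k) (hf : MemLp f 2 μ) (hg : MemLp g 2 μ) :
    crossMoment μ f (coordCondExp μ m g) = crossMoment μ f g := by
  ext k l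
  exact integral_mul_condExp_of_stronglyMeasurable hm (hfm k)
    (integrable_mul_of_memLp_two hf hg k l) ((hg.eval l).integrable one_le_two)

theorem crossMoment_sub_coordCondExp_sub_coordCondExp (hm : m ≤ mΩ) {f : Ω → a → ℝ}
    {g : Ω → b → ℝ} (hf : MemLp f 2 μ) (hg : MemLp g 2 μ) :
    crossMoment μ (f - coordCondExp μ m f) (g - coordCondExp μ m g)
      = crossMoment μ f (g - coordCondExp μ m g) := by
  have hfhat : MemLp (coordCondExp μ m f) 2 μ := memLp_coordCondExp one_le_two hf
  have hghat : MemLp (coordCondExp μ m g) 2 μ := memLp_coordCondExp one_le_two hg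
  have hfmeas (k : a) : StronglyMeasurable[m] fun ω => coordCondExp μ m f ω k :=
    stronglyMeasurable_condExp
  have orthogonal : crossMoment μ (coordCondExp μ m f) (g - coordCondExp μ m g) = 0 := by
    rw [crossMoment_sub_right hfhat hg hghat,
      crossMoment_coordCondExp_right hm hfmeas hfhat hg, sub_self]
  rw [crossMoment_sub_left hf hfhat (hg.sub hghat), orthogonal, sub_zero]

end Innovation

section Gaussian

variable {Ω : Type*} [MeasurableSpace Ω] {μ : Measure Ω}

theorem memLp_of_map_eq_gaussianReal {f : Ω → ℝ} (hf : AEMeasurable f μ) {r : ℝ} {v : NNReal}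
    (h : μ.map f = gaussianReal r v) (p : NNReal) : MemLp f p μ :=
  (memLp_map_measure_iff aestronglyMeasurable_id hf).1 (h ▸ memLp_id_gaussianReal p)

theorem memLp_of_forall_map_dotProduct_eq_gaussianReal {a : Type*} [Fintype a] {f : Ω → a → ℝ}
    (hf : Measurable f) (h : ∀ u : a → ℝ, ∃ r v, μ.map (fun ω => u ⬝ᵥ f ω) = gaussianReal r v)
    (p : NNReal) : MemLp f p μ := by
  classical
  refine MemLp.of_eval fun k => ?_
  obtain ⟨_, _, hk⟩ := h (Pi.single k 1)
  simp only [single_one_dotProduct] at hk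
  exact memLp_of_map_eq_gaussianReal (by fun_prop) hk p

end Gaussian

section TeamError

variable {Ω ι a : Type*} {b d : ι → Type*} {m mΩ : MeasurableSpace Ω} {μ : Measure Ω} [Fintype ι]
  [Fintype a] [∀ i, Fintype (b i)] [∀ i, Fintype (d i)]

/-- The expected team estimation error `E[∑ᵢⱼ (Lᵢ x - zᵢ)ᵀ Sᵢⱼ (Lⱼ x - zⱼ)]` of the estimates
`zᵢ` of `Lᵢ x`. -/
noncomputable def teamError (μ : Measure Ω) (L : ∀ i, Matrix (d i) a ℝ)
    (S : ∀ i j, Matrix (d i) (d j) ℝ) (x : Ω → a → ℝ) (z : ∀ i, Ω → d i → ℝ) : ℝ :=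
  ∫ ω, ∑ i, ∑ j, (L i *ᵥ x ω - z i ω) ⬝ᵥ S i j *ᵥ (L j *ᵥ x ω - z j ω) ∂μ

theorem teamError_mulVec_eq_sum_trace (L : ∀ i, Matrix (d i) a ℝ)
    (S : ∀ i j, Matrix (d i) (d j) ℝ) {x : Ω → a → ℝ} (hx : MemLp x 2 μ) {u : ι → Ω → a → ℝ}
    (hu : ∀ i, MemLp (u i) 2 μ) :
    teamError μ L S x (fun i ω => L i *ᵥ u i ω)
      = ∑ i, ∑ j, ((L i)ᵀ * S i j * L j * crossMoment μ (x - u j) (x - u i)).trace := by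
  have hint (i j : ι) := integrable_dotProduct_mulVec ((L i)ᵀ * S i j * L j)
    (hx.sub (hu i)) (hx.sub (hu j))
  have integrand (i j : ι) (ω : Ω) :
      (L i *ᵥ x ω - L i *ᵥ u i ω) ⬝ᵥ S i j *ᵥ (L j *ᵥ x ω - L j *ᵥ u j ω)
        = (x - u i) ω ⬝ᵥ ((L i)ᵀ * S i j * L j) *ᵥ (x - u j) ω := by
    simp only [Pi.sub_apply, ← mulVec_sub, ← mulVec_mulVec, dotProduct_mulVec _ (L i)ᵀ,
      vecMul_transpose]
  simp only [teamError, integrand]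
  rw [integral_finsetSum _ fun i _ => integrable_finsetSum _ fun j _ => hint i j]
  refine Finset.sum_congr rfl fun i _ => ?_
  rw [integral_finsetSum _ fun j _ => hint i j]
  exact Finset.sum_congr rfl fun j _ =>
    integral_dotProduct_mulVec _ (hx.sub (hu i)) (hx.sub (hu j))

theorem stmt16_general [IsFiniteMeasure μ] (hm : m ≤ mΩ) {x xhat0 : Ω → a → ℝ}
    {y yhat : ∀ i, Ω → b i → ℝ} (hx : MemLp x 2 μ) (hy : ∀ i, MemLp (y i) 2 μ)
    (hxhat0 : xhat0 = coordCondExp μ m x) (hyhat : ∀ i, yhat i = coordCondExp μ m (y i))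
    {Θhat : ∀ i, Matrix a (b i) ℝ}
    (hΘhat : ∀ i, Θhat i = crossMoment μ x (y i - yhat i))
    {Sigmahat : ∀ i j, Matrix (b i) (b j) ℝ}
    (hSigmahat : ∀ i j, Sigmahat i j = crossMoment μ (y i - yhat i) (y j - yhat j))
    {P0 : Matrix a a ℝ} (hP0 : P0 = crossMoment μ (x - xhat0) (x - xhat0))
    {L : ∀ i, Matrix (d i) a ℝ} {S : ∀ i j, Matrix (d i) (d j) ℝ} {Lbig : Matrix (Σ i, d i) a ℝ}
    (hLbig : ∀ i r k, Lbig ⟨i, r⟩ k = L i r k) {Sbig : Matrix (Σ i, d i) (Σ i, d i) ℝ}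
    (hSbig : ∀ i j r s, Sbig ⟨i, r⟩ ⟨j, s⟩ = S i j r s) (hSsymm : Sbig.IsSymm)
    (K : ∀ i, Matrix a (b i) ℝ) :
    teamError μ L S x (fun i ω => L i *ᵥ (xhat0 ω + K i *ᵥ (y i ω - yhat i ω)))
      = (Lbigᵀ * Sbig * Lbig * P0).trace
        + ∑ i, ((K i)ᵀ * (L i)ᵀ
            * ∑ j, S i j * L j * (K j * Sigmahat j i - (2 : ℝ) • Θhat i)).trace := by
  have hxhat : MemLp xhat0 2 μ := hxhat0 ▸ memLp_coordCondExp one_le_two hx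
  have he : MemLp (x - xhat0) 2 μ := hx.sub hxhat
  have hw (i : ι) : MemLp (y i - yhat i) 2 μ :=
    (hy i).sub (hyhat i ▸ memLp_coordCondExp one_le_two (hy i))
  have hΘ (i : ι) : crossMoment μ (x - xhat0) (y i - yhat i) = Θhat i := by
    rw [hΘhat, hxhat0, hyhat, crossMoment_sub_coordCondExp_sub_coordCondExp hm hx (hy i)]
  have hS (i j : ι) : (S i j)ᵀ = S j i := by
    ext r s
    rw [transpose_apply, ← hSbig, ← hSbig, hSsymm.apply]
  have hM (i j : ι) : ((L i)ᵀ * S i j * L j)ᵀ = (L j)ᵀ * S j i * L i := by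
    simp only [transpose_mul, transpose_transpose, hS, Matrix.mul_assoc]
  refine (teamError_mulVec_eq_sum_trace L S hx fun i =>
    hxhat.add (memLp_mulVec (K i) (hw i))).trans ?_
  simp only [← sub_sub, crossMoment_sub_mulVec_sub_mulVec he (hw _) (hw _), hΘ, ← hSigmahat, ← hP0]
  rw [sum_trace_mul_gain_error hM, transpose_mul_mul_eq_sum_blocks hLbig hSbig]
  simp only [Matrix.mul_sum, trace_sum, Matrix.mul_assoc]

end TeamError

/-- Multi-agent Gaussian estimation: the naive MMSE strategy
`ẑᵢ = Lᵢ E[x | y₀, yᵢ] = Lᵢ (x̂₀ + Kᵢ ỹᵢ)` with `Kᵢ = Θ̂ᵢ Σ̂ᵢᵢ⁻¹` incurs the expected team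
estimation error
`J^mmse = Tr(Lᵀ S L P₀) + Σᵢ Tr(Kᵢᵀ Lᵢᵀ Σⱼ Sᵢⱼ Lⱼ [Kⱼ Σ̂ⱼᵢ − 2 Θ̂ᵢ])`,
where `P₀ = Var(x − x̂₀)`. -/
theorem stmt16 {Ω : Type*} [MeasurableSpace Ω] (μ : Measure Ω) [IsProbabilityMeasure μ]
    (dx q n : ℕ) (dy dz : Fin n → ℕ)
    (x : Ω → Fin dx → ℝ) (y0 : Ω → Fin q → ℝ) (y : ∀ i : Fin n, Ω → Fin (dy i) → ℝ)
    (hx : Measurable x) (hy0 : Measurable y0) (hy : ∀ i, Measurable (y i))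
    (hGauss : ∀ (a : Fin dx → ℝ) (b0 : Fin q → ℝ) (b : ∀ i, Fin (dy i) → ℝ),
      ∃ v : NNReal,
        μ.map (fun ω => (∑ k, a k * x ω k) + (∑ k, b0 k * y0 ω k)
          + ∑ i, ∑ k, b i k * y i ω k) = gaussianReal 0 v)
    (Sigma00 : Matrix (Fin q) (Fin q) ℝ)
    (hSigma00 : ∀ k l, Sigma00 k l = ∫ ω, y0 ω k * y0 ω l ∂μ)
    (hinv0 : IsUnit Sigma00.det)
    (xhat0 : Ω → Fin dx → ℝ)
    (hxhat0 : xhat0 = fun ω k =>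
      (μ[(fun ω => x ω k) | MeasurableSpace.comap y0 inferInstance]) ω)
    (yhat : ∀ i : Fin n, Ω → Fin (dy i) → ℝ)
    (hyhat : ∀ i, yhat i = fun ω k =>
      (μ[(fun ω => y i ω k) | MeasurableSpace.comap y0 inferInstance]) ω)
    (Θhat : ∀ i, Matrix (Fin dx) (Fin (dy i)) ℝ)
    (hΘhat : ∀ i k l, Θhat i k l = ∫ ω, x ω k * (y i ω l - yhat i ω l) ∂μ)
    (Sigmahat : ∀ i j, Matrix (Fin (dy i)) (Fin (dy j)) ℝ)
    (hSigmahat : ∀ i j k l, Sigmahat i j k l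
      = ∫ ω, (y i ω k - yhat i ω k) * (y j ω l - yhat j ω l) ∂μ)
    (hinv : ∀ i, IsUnit (Sigmahat i i).det)
    (P0 : Matrix (Fin dx) (Fin dx) ℝ)
    (hP0 : ∀ k l, P0 k l = ∫ ω, (x ω k - xhat0 ω k) * (x ω l - xhat0 ω l) ∂μ)
    (L : ∀ i : Fin n, Matrix (Fin (dz i)) (Fin dx) ℝ)
    (S : ∀ i j : Fin n, Matrix (Fin (dz i)) (Fin (dz j)) ℝ)
    (Lbig : Matrix (Σ i : Fin n, Fin (dz i)) (Fin dx) ℝ)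
    (hLbig : ∀ (i : Fin n) (r : Fin (dz i)) (k : Fin dx), Lbig ⟨i, r⟩ k = L i r k)
    (Sbig : Matrix (Σ i : Fin n, Fin (dz i)) (Σ i : Fin n, Fin (dz i)) ℝ)
    (hSbig : ∀ (i j : Fin n) (r : Fin (dz i)) (r' : Fin (dz j)),
      Sbig ⟨i, r⟩ ⟨j, r'⟩ = S i j r r')
    (hSpd : Sbig.PosDef)
    (K : ∀ i, Matrix (Fin dx) (Fin (dy i)) ℝ)
    (hK : ∀ i, K i = Θhat i * (Sigmahat i i)⁻¹)
    (J : (∀ i : Fin n, Ω → Fin (dz i) → ℝ) → ℝ)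
    (hJ : ∀ z, J z = ∫ ω, ∑ i, ∑ j,
      ((L i).mulVec (x ω) - z i ω) ⬝ᵥ (S i j).mulVec ((L j).mulVec (x ω) - z j ω) ∂μ) :
    J (fun i ω => (L i).mulVec (fun k =>
          xhat0 ω k + (K i).mulVec (fun l => y i ω l - yhat i ω l) k))
      = (Lbigᵀ * Sbig * Lbig * P0).trace
        + ∑ i, ((K i)ᵀ * (L i)ᵀ
            * ∑ j, S i j * L j * (K j * Sigmahat j i - (2 : ℝ) • Θhat i)).trace := by
  have hxL : MemLp x 2 μ := memLp_of_forall_map_dotProduct_eq_gaussianReal hx (fun u =>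
    ⟨0, by simpa [dotProduct] using hGauss u 0 0⟩) 2
  have hyL (i : Fin n) : MemLp (y i) 2 μ :=
    memLp_of_forall_map_dotProduct_eq_gaussianReal (hy i) (fun u =>
      ⟨0, by simpa [sum_single_mul_eq_dotProduct] using hGauss 0 0 (Pi.single i u)⟩) 2
  exact (hJ _).trans <| stmt16_general hy0.comap_le hxL hyL hxhat0 hyhat
    (fun i => Matrix.ext (hΘhat i)) (fun i j => Matrix.ext (hSigmahat i j)) (Matrix.ext hP0)
    hLbig hSbig (isHermitian_iff_isSymm.1 hSpd.isHermitian) K
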